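/- Let K be an infinite field and n ≤ r with 3r ≤ 4n. Then there exist an invertible matrix R ∈ GL_r(K) and three diagonal r×r matrices D_1, D_2, D_3 over K such that, writing Z_i = R^{-1} D_i R in block form Z_i = [[A_i, B_i],[C_i, D'_i]] with A_i of size n×n and B_i of size n×(r−n), the three matrices B_1, B_2, B_3 have rank r−n and the three subspaces Im B_1, Im B_2, Im B_3 are independent (their sum is direct). -/

import Mathlib

/-!
Put `m = r - n`, so that `3 m ≤ n`. Take `R = [[1, J], [0, 1]]`, whose inverse is
`[[1, -J], [0, 1]]`, and a diagonal matrix `D = diag(e, 0)` supported on the first `n`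
coordinates. Then the top-right block of `R⁻¹ D R` is `diag(e) J`
(`toBlocks₁₂_conj_diagonal`). Let `J` stack copies of the `m × m` identity matrix on top of each
other, and let `e_c` be the indicator of the `c`-th block of `m` consecutive coordinates, for
`c = 0, 1, 2`; these three blocks fit because `3 m ≤ n`. Then `diag(e_c) J` is the `c`-th identity
block alone, hence of rank `m` (`rank_diagonal_mul_stackedOne`), and the three images are
independent since they are supported on disjoint sets of coordinates
(`range_inf_sup_eq_bot_of_disjoint_support`). This works over every field.
-/

open Matrix

/-- The block unitriangular matrix `[[1, J], [0, 1]]` as an invertible matrix. -/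
def unipotentUnit {ι κ K : Type*} [Field K] [Fintype ι] [Fintype κ] [DecidableEq ι]
    [DecidableEq κ] (J : Matrix ι κ K) : (Matrix (ι ⊕ κ) (ι ⊕ κ) K)ˣ where
  val := fromBlocks 1 J 0 1
  inv := fromBlocks 1 (-J) 0 1
  val_inv := by simp [fromBlocks_multiply, ← fromBlocks_one]
  inv_val := by simp [fromBlocks_multiply, ← fromBlocks_one]

theorem toBlocks₁₂_conj_diagonal {ι κ K : Type*} [Field K] [Fintype ι] [Fintype κ]
    [DecidableEq ι] [DecidableEq κ] (J : Matrix ι κ K) (e : ι → K) :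
    (((unipotentUnit J)⁻¹).val * Matrix.diagonal (Sum.elim e 0) *
      (unipotentUnit J).val).toBlocks₁₂ = Matrix.diagonal e * J := by
  have hD : Matrix.diagonal (Sum.elim e (0 : κ → K)) = fromBlocks (Matrix.diagonal e) 0 0 0 := by
    rw [← fromBlocks_diagonal]
    simp
  change toBlocks₁₂ (fromBlocks 1 (-J) 0 1 * _ * fromBlocks 1 J 0 1) = _
  rw [hD]
  simp [fromBlocks_multiply]

theorem range_inf_sup_eq_bot_of_disjoint_support {ι κ K : Type*} [Field K] [Fintype ι]
    [Fintype κ] [DecidableEq ι] (J : Matrix ι κ K) (e e₁ e₂ : ι → K)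
    (h : ∀ i, e i = 0 ∨ (e₁ i = 0 ∧ e₂ i = 0)) :
    LinearMap.range (Matrix.diagonal e * J).mulVecLin ⊓
      (LinearMap.range (Matrix.diagonal e₁ * J).mulVecLin ⊔
        LinearMap.range (Matrix.diagonal e₂ * J).mulVecLin) = ⊥ := by
  rw [eq_bot_iff]
  rintro x ⟨⟨v, rfl⟩, hx⟩
  obtain ⟨_, ⟨v₁, rfl⟩, _, ⟨v₂, rfl⟩, hs⟩ := Submodule.mem_sup.1 hx
  rw [Submodule.mem_bot]
  ext i
  have hi := congrFun hs i
  simp only [mulVecLin_apply, ← mulVec_mulVec, mulVec_diagonal, Pi.add_apply,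
    Pi.zero_apply] at hi ⊢
  rcases h i with h | ⟨h₁, h₂⟩
  · simp [h]
  · rw [← hi, h₁, h₂]
    simp

/-- The `n × m` matrix obtained by stacking copies of the `m × m` identity matrix (the last copy
possibly truncated). -/
def stackedOne (K : Type*) [Field K] (n m : ℕ) : Matrix (Fin n) (Fin m) K :=
  Matrix.of fun i j => if i.val % m = j.val then 1 else 0

/-- The indicator of the `c`-th block of `m` consecutive indices, `c m ≤ i < (c + 1) m`, when
`m > 0`; for `m = 0` the value is immaterial, since `stackedOne K n 0` has no columns. -/
def blockIndicator (K : Type*) [Field K] (n m c : ℕ) : Fin n → K :=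
  fun i => if i.val / m = c then 1 else 0

theorem rank_diagonal_mul_stackedOne (K : Type*) [Field K] (n m c : ℕ)
    (h : (c + 1) * m ≤ n) :
    (Matrix.diagonal (blockIndicator K n m c) * stackedOne K n m).rank = m := by
  have hinj : Function.Injective
      (Matrix.diagonal (blockIndicator K n m c) * stackedOne K n m).mulVecLin := by
    rw [← LinearMap.ker_eq_bot, LinearMap.ker_eq_bot']
    intro v hv
    ext j
    -- The coordinate `c m + j` of the image of `v` is `v j`.
    have hlt : c * m + j.val < n := by
      have := j.isLt
      rw [Nat.succ_mul] at h
      omega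
    have hm : 0 < m := j.pos
    have hj := congrFun hv ⟨c * m + j.val, hlt⟩
    have hdiv : (c * m + j.val) / m = c := by
      rw [mul_comm, Nat.mul_add_div hm, Nat.div_eq_of_lt j.isLt, add_zero]
    have hmod : (c * m + j.val) % m = j.val := by
      rw [mul_comm, Nat.mul_add_mod, Nat.mod_eq_of_lt j.isLt]
    rw [mulVecLin_apply, ← mulVec_mulVec, mulVec_diagonal] at hj
    simpa [blockIndicator, stackedOne, hdiv, hmod, mulVec,
      dotProduct, Fin.val_inj] using hj
  rw [Matrix.rank, LinearMap.finrank_range_of_inj hinj]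
  simp

/-- (Proposition 5.7.) Over an infinite field, if `3r ≤ 4n` then one can
choose an invertible `R` of size `r` and three diagonal matrices `D_1, D_2, D_3` such that
the top-right `n×(r−n)` blocks `B_1, B_2, B_3` of `Z_i = R⁻¹ D_i R` have rank `r−n` and
the subspaces `Im B_1, Im B_2, Im B_3` are independent (their sum is direct, i.e. each
intersects the sum of the other two trivially). Size-`r` matrices are indexed by
`Fin n ⊕ Fin (r−n)`. -/
theorem exists_conjugated_diagonals_topRight_directSum_three
    (K : Type*) [Field K] [Infinite K] (n r : ℕ) (hnr : n ≤ r) (hr : 3 * r ≤ 4 * n) :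
    ∃ (R : (Matrix (Fin n ⊕ Fin (r - n)) (Fin n ⊕ Fin (r - n)) K)ˣ)
      (d₁ d₂ d₃ : Fin n ⊕ Fin (r - n) → K),
      (((R⁻¹).val * Matrix.diagonal d₁ * R.val).toBlocks₁₂).rank = r - n ∧
      (((R⁻¹).val * Matrix.diagonal d₂ * R.val).toBlocks₁₂).rank = r - n ∧
      (((R⁻¹).val * Matrix.diagonal d₃ * R.val).toBlocks₁₂).rank = r - n ∧
      (LinearMap.range (((R⁻¹).val * Matrix.diagonal d₁ * R.val).toBlocks₁₂).mulVecLin ⊓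
        (LinearMap.range (((R⁻¹).val * Matrix.diagonal d₂ * R.val).toBlocks₁₂).mulVecLin ⊔
         LinearMap.range (((R⁻¹).val * Matrix.diagonal d₃ * R.val).toBlocks₁₂).mulVecLin)
        = ⊥) ∧
      (LinearMap.range (((R⁻¹).val * Matrix.diagonal d₂ * R.val).toBlocks₁₂).mulVecLin ⊓
        (LinearMap.range (((R⁻¹).val * Matrix.diagonal d₁ * R.val).toBlocks₁₂).mulVecLin ⊔
         LinearMap.range (((R⁻¹).val * Matrix.diagonal d₃ * R.val).toBlocks₁₂).mulVecLin)
        = ⊥) ∧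
      (LinearMap.range (((R⁻¹).val * Matrix.diagonal d₃ * R.val).toBlocks₁₂).mulVecLin ⊓
        (LinearMap.range (((R⁻¹).val * Matrix.diagonal d₁ * R.val).toBlocks₁₂).mulVecLin ⊔
         LinearMap.range (((R⁻¹).val * Matrix.diagonal d₂ * R.val).toBlocks₁₂).mulVecLin)
        = ⊥) := by
  have hm : 3 * (r - n) ≤ n := by omega
  have hdisj : ∀ a b c : ℕ, a ≠ b → a ≠ c → ∀ i, blockIndicator K n (r - n) a i = 0 ∨
      (blockIndicator K n (r - n) b i = 0 ∧ blockIndicator K n (r - n) c i = 0) := by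
    intro a b c hab hac i
    by_cases hi : i.val / (r - n) = a
    · right
      simp [blockIndicator, hi, hab, hac]
    · left
      simp [blockIndicator, hi]
  refine ⟨unipotentUnit (stackedOne K n (r - n)),
    Sum.elim (blockIndicator K n (r - n) 0) 0, Sum.elim (blockIndicator K n (r - n) 1) 0,
    Sum.elim (blockIndicator K n (r - n) 2) 0, ?_⟩
  simp only [toBlocks₁₂_conj_diagonal]
  refine ⟨rank_diagonal_mul_stackedOne K n _ 0 (by omega),
    rank_diagonal_mul_stackedOne K n _ 1 (by omega),
    rank_diagonal_mul_stackedOne K n _ 2 (by omega), ?_, ?_, ?_⟩ <;>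
  exact range_inf_sup_eq_bot_of_disjoint_support _ _ _ _
    (hdisj _ _ _ (by decide) (by decide))
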